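/- arXiv:math/0603503 — 3 statements merged into one kernel-verified Lean document; each statement's English description precedes it below -/
import Mathlib

section
/- The 2×2 complex matrices P_1 = [[1,0],[0,0]], P_2 = [[1/4, √3/4],[√3/4, 3/4]], P_3 = [[1/4, −√3/4],[−√3/4, 3/4]] are orthogonal projections (self-adjoint idempotents) on ℂ² satisfying P_1 + P_2 + P_3 = (3/2)·I, and the triple (P_1, P_2, P_3) is irreducible: the only self-adjoint idempotent 2×2 matrices commuting with P_1, P_2, and P_3 are 0 and I. -/
open Matrix

/-!
The projection and sum identities are entrywise computations using `√3 * √3 = 3`. For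
irreducibility, commuting with `P₁` makes `R` diagonal, and commuting with `P₂`, whose
off-diagonal entries are nonzero, makes `R` scalar; an idempotent scalar is `0` or `1`.
-/

/-- The matrices `P₁ = [[1,0],[0,0]]`, `P₂ = [[1/4,√3/4],[√3/4,3/4]]`,
`P₃ = [[1/4,−√3/4],[−√3/4,3/4]]` are orthogonal projections on `ℂ²` with
`P₁ + P₂ + P₃ = (3/2)·I`, and the triple `(P₁,P₂,P₃)` is irreducible. -/
theorem stmt_12 :
    let P₁ : Matrix (Fin 2) (Fin 2) ℂ := !![1, 0; 0, 0]
    let P₂ : Matrix (Fin 2) (Fin 2) ℂ :=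
      !![1/4, (Real.sqrt 3 : ℂ)/4; (Real.sqrt 3 : ℂ)/4, 3/4]
    let P₃ : Matrix (Fin 2) (Fin 2) ℂ :=
      !![1/4, -(Real.sqrt 3 : ℂ)/4; -(Real.sqrt 3 : ℂ)/4, 3/4]
    (P₁ * P₁ = P₁ ∧ P₁ᴴ = P₁) ∧ (P₂ * P₂ = P₂ ∧ P₂ᴴ = P₂) ∧ (P₃ * P₃ = P₃ ∧ P₃ᴴ = P₃) ∧
    P₁ + P₂ + P₃ = (3/2 : ℂ) • (1 : Matrix (Fin 2) (Fin 2) ℂ) ∧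
    (∀ R : Matrix (Fin 2) (Fin 2) ℂ, Rᴴ = R → R * R = R →
      R * P₁ = P₁ * R → R * P₂ = P₂ * R → R * P₃ = P₃ * R →
      R = 0 ∨ R = 1) := by
  intro P₁ P₂ P₃
  have hs : (Real.sqrt 3 : ℂ) * (Real.sqrt 3 : ℂ) = 3 := by
    rw [← Complex.ofReal_mul, Real.mul_self_sqrt (by norm_num)]
    norm_num
  have hs0 : (Real.sqrt 3 : ℂ) ≠ 0 := by
    intro h
    simp [h] at hs
  refine ⟨⟨?_, ?_⟩, ⟨?_, ?_⟩, ⟨?_, ?_⟩, ?_, ?_⟩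
  · ext i j
    fin_cases i <;> fin_cases j <;> simp [P₁, Matrix.mul_apply]
  · ext i j
    fin_cases i <;> fin_cases j <;> simp [P₁]
  · ext i j
    fin_cases i <;> fin_cases j <;> simp [P₂, Matrix.mul_apply] <;> grind
  · ext i j
    fin_cases i <;> fin_cases j <;> simp [P₂]
  · ext i j
    fin_cases i <;> fin_cases j <;> simp [P₃, Matrix.mul_apply] <;> grind
  · ext i j
    fin_cases i <;> fin_cases j <;> simp [P₃]
  · ext i j
    fin_cases i <;> fin_cases j <;> simp [P₁, P₂, P₃] <;> ring
  · intro R _ hR h1 h2 _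
    have h01 : R 0 1 = 0 := by
      simpa [P₁, Matrix.mul_apply] using (congrFun (congrFun h1 0) 1).symm
    have h10 : R 1 0 = 0 := by
      simpa [P₁, Matrix.mul_apply] using congrFun (congrFun h1 1) 0
    -- The off-diagonal entry √3/4 of `P₂` is nonzero, so it forces the diagonal of `R` to be constant.
    have hd : R 0 0 = R 1 1 := by
      have h := congrFun (congrFun h2 0) 1
      simp [P₂, Matrix.mul_apply, h01] at h
      apply mul_right_cancel₀ hs0
      linear_combination 4 * h
    have hq : R 0 0 * R 0 0 = R 0 0 := by
      simpa [Matrix.mul_apply, h01] using congrFun (congrFun hR 0) 0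
    rcases (IsIdempotentElem.iff_eq_zero_or_one.mp hq) with h | h
    · left
      ext i j
      fin_cases i <;> fin_cases j <;> simp [h01, h10, ← hd, h]
    · right
      ext i j
      fin_cases i <;> fin_cases j <;> simp [h01, h10, ← hd, h]
end

section
/- The mapping (a,b,c) ↦ λ = (b² − a²c²)/(1 − a²)² + i·(2abc)/(1 − a²)² is a bijection from the region Ω onto the complex plane with the points 0 and 1 removed. -/
/-!
The value `λ` is the square of `w = (b + i a c) / (1 - a²)`, so the map factors through `w`.
Squaring is a bijection from the half-open half-plane `{Re w > 0} ∪ {Re w = 0, Im w > 0}` minus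
`1` onto `ℂ \ {0, 1}` (`sq_bijOn`), so the point is that `w` maps `Ω` bijectively onto that
punctured half-plane (`rootMap_bijOn`).

Write `w = x + i y` and `s = 1 - a² = b² + c² ∈ (0, 1]`. Then `b = x s` and `a c = y s`, and
eliminating `c` gives `y² s = (1 - s) (1 - x² s)`, that is
`x² s² - (x² + y² + 1) s + 1 = 0`. This quadratic is positive at `s = 0` and equals `-y² ≤ 0` at
`s = 1`, so its smaller root lies in `(0, 1]` and its larger root is at least `1`. The sign
conditions defining `Ω` force `s` to be the smaller root also when `y = 0`, where the roots are
`1` and `x⁻²`: the segment `0 < x < 1` comes from `a = 0`, the ray `x > 1` from `c = 0`.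
-/

/-- The region `Ω` on the unit sphere in `ℝ³`. -/
def OmegaRegion : Set (ℝ × ℝ × ℝ) :=
  {p | p.1 ^ 2 + p.2.1 ^ 2 + p.2.2 ^ 2 = 1 ∧
    ((0 < p.1 ∧ 0 < p.2.1 ∧ -1 < p.2.2 ∧ p.2.2 < 1) ∨
     (p.1 = 0 ∧ 0 < p.2.1 ∧ 0 < p.2.2) ∨
     (p.2.1 = 0 ∧ 0 < p.1 ∧ 0 < p.2.2))}

/-- The distinguished square root `w = (b + i a c) / (1 - a²)` of `λ`. -/
noncomputable def rootMap (p : ℝ × ℝ × ℝ) : ℂ :=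
  ⟨p.2.1 / (1 - p.1 ^ 2), p.1 * p.2.2 / (1 - p.1 ^ 2)⟩

/-- A set of representatives of `ℂ \ {0, 1, -1}` modulo `w ↦ -w`: the right half-plane together
with the positive imaginary axis, with the point `1` removed. -/
def halfPlane : Set ℂ :=
  {w | (0 < w.re ∨ (w.re = 0 ∧ 0 < w.im)) ∧ w ≠ 1}

lemma sq_bijOn : Set.BijOn (fun w : ℂ => w ^ 2) halfPlane {z : ℂ | z ≠ 0 ∧ z ≠ 1} := by
  refine ⟨?_, ?_, ?_⟩
  · rintro w ⟨hw, hw1⟩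
    refine ⟨?_, ?_⟩
    · intro h
      have h0 : w = 0 := by simpa using h
      subst h0
      simp at hw
    · intro h
      rcases sq_eq_sq_iff_eq_or_eq_neg.mp (h.trans (one_pow 2).symm) with h | h
      · exact hw1 h
      · subst h
        norm_num at hw
  · rintro w ⟨hw, -⟩ v ⟨hv, -⟩ h
    rcases sq_eq_sq_iff_eq_or_eq_neg.mp h with h | h
    · exact h
    · subst h
      simp only [Complex.neg_re, Complex.neg_im] at hw
      rcases hw with h1 | ⟨h1, h2⟩ <;> rcases hv with h3 | ⟨h3, h4⟩ <;> linarith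
  · rintro z ⟨hz0, hz1⟩
    obtain ⟨w, hw⟩ := IsAlgClosed.exists_pow_nat_eq z (n := 2) (by norm_num)
    have hw1 : w ≠ 1 := by
      rintro rfl
      exact hz1 (by simpa using hw.symm)
    have hw2 : -w ≠ 1 := by
      intro h
      apply hz1
      rw [← hw, ← neg_sq, h, one_pow]
    have hw0 : ¬ (w.re = 0 ∧ w.im = 0) := by
      rintro ⟨h1, h2⟩
      apply hz0
      have : w = 0 := Complex.ext h1 h2
      rw [← hw, this]
      norm_num
    by_cases h : 0 < w.re ∨ (w.re = 0 ∧ 0 < w.im)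
    · exact ⟨w, ⟨h, hw1⟩, hw⟩
    · refine ⟨-w, ⟨?_, hw2⟩, by simpa using hw⟩
      simp only [Complex.neg_re, Complex.neg_im]
      grind

lemma one_sub_sq_pos {p : ℝ × ℝ × ℝ} (hp : p ∈ OmegaRegion) : 0 < 1 - p.1 ^ 2 := by
  obtain ⟨h, h' | h' | h'⟩ := hp
  · nlinarith [sq_nonneg p.2.2, pow_pos h'.2.1 2]
  · rw [h'.1]
    norm_num
  · nlinarith [sq_nonneg p.2.1, pow_pos h'.2.2 2]

lemma fst_nonneg {p : ℝ × ℝ × ℝ} (hp : p ∈ OmegaRegion) : 0 ≤ p.1 := by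
  obtain ⟨h, h' | h' | h'⟩ := hp
  · exact h'.1.le
  · exact h'.1.ge
  · exact h'.2.1.le

lemma thd_pos {p : ℝ × ℝ × ℝ} (hp : p ∈ OmegaRegion) (h0 : p.1 = 0) : 0 < p.2.2 := by
  obtain ⟨h, h' | h' | h'⟩ := hp
  · exact absurd h0 h'.1.ne'
  · exact h'.2.2
  · exact h'.2.2

lemma rootMap_mapsTo : Set.MapsTo rootMap OmegaRegion halfPlane := by
  intro p hp
  have hs := one_sub_sq_pos hp
  have hc := thd_pos hp
  obtain ⟨a, b, c⟩ := p
  obtain ⟨h, h'⟩ := hp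
  simp only at h h' hs hc
  refine ⟨?_, ?_⟩
  · simp only [rootMap]
    rcases h' with h' | h' | h'
    · exact Or.inl (div_pos h'.2.1 hs)
    · exact Or.inl (div_pos h'.2.1 hs)
    · exact Or.inr ⟨by simp [h'.1], div_pos (mul_pos h'.2.1 h'.2.2) hs⟩
  · intro h1
    have hx := congrArg Complex.re h1
    have hy := congrArg Complex.im h1
    simp only [rootMap, Complex.one_re, Complex.one_im] at hx hy
    rw [div_eq_one_iff_eq hs.ne'] at hx
    have hy' : a * c = 0 := by
      rcases div_eq_zero_iff.mp hy with h2 | h2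
      · exact h2
      · exact absurd h2 hs.ne'
    rcases mul_eq_zero.mp hy' with h2 | h2
    · have := hc h2
      subst h2
      norm_num at hx
      subst hx
      nlinarith
    · subst h2
      -- `b = 1 - a²` and `b² = 1 - a²` with `1 - a² > 0` leave only `a = 0`, where `c > 0`.
      have h3 : (1 - a ^ 2) * a ^ 2 = 0 := by
        rw [hx] at h
        linear_combination -h
      have h4 : a = 0 := by
        rcases mul_eq_zero.mp h3 with h4 | h4
        · exact absurd h4 hs.ne'
        · simpa using h4
      exact lt_irrefl _ (hc h4)

/-- Two roots at most `1` of the quadratic for `s = 1 - a²` agree, provided that the root `1`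
only occurs when `x² < 1`. -/
lemma root_unique {x y s t : ℝ} (hs1 : s ≤ 1) (ht1 : t ≤ 1)
    (es : y ^ 2 * s = (1 - s) * (1 - x ^ 2 * s)) (et : y ^ 2 * t = (1 - t) * (1 - x ^ 2 * t))
    (hs' : s = 1 → x ^ 2 < 1) (ht' : t = 1 → x ^ 2 < 1) : s = t := by
  by_contra hne
  have hd : s - t ≠ 0 := sub_ne_zero.mpr hne
  -- Vieta's formulas for the two distinct roots.
  have hprod : x ^ 2 * (s * t) = 1 := by
    apply mul_left_cancel₀ hd
    linear_combination s * et - t * es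
  have hsum : x ^ 2 * (s + t) = x ^ 2 + y ^ 2 + 1 := by
    apply mul_left_cancel₀ hd
    linear_combination et - es
  have hxpos : 0 < x ^ 2 := by
    by_contra hx
    have : x ^ 2 = 0 := le_antisymm (not_lt.mp hx) (sq_nonneg x)
    rw [this] at hprod
    norm_num at hprod
  have hkey : x ^ 2 * ((1 - s) * (1 - t)) = - y ^ 2 := by
    linear_combination hprod - hsum
  have hnn : 0 ≤ (1 - s) * (1 - t) := mul_nonneg (by linarith) (by linarith)
  have hz : (1 - s) * (1 - t) = 0 := by
    have : x ^ 2 * ((1 - s) * (1 - t)) = 0 :=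
      le_antisymm (by rw [hkey]; nlinarith [sq_nonneg y]) (mul_nonneg hxpos.le hnn)
    exact (mul_eq_zero.mp this).resolve_left hxpos.ne'
  rcases mul_eq_zero.mp hz with h | h
  · have h1 : s = 1 := by linarith
    have := hs' h1
    rw [h1] at hprod
    nlinarith
  · have h1 : t = 1 := by linarith
    have := ht' h1
    rw [h1] at hprod
    nlinarith

/-- The relations between a point of `Ω` and `x + i y = rootMap p`, in the form needed for
`root_unique`. -/
lemma rootMap_spec {p : ℝ × ℝ × ℝ} (hp : p ∈ OmegaRegion) :
    p.2.1 = (rootMap p).re * (1 - p.1 ^ 2) ∧ p.1 * p.2.2 = (rootMap p).im * (1 - p.1 ^ 2) ∧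
    (rootMap p).im ^ 2 * (1 - p.1 ^ 2) =
      (1 - (1 - p.1 ^ 2)) * (1 - (rootMap p).re ^ 2 * (1 - p.1 ^ 2)) ∧
    (1 - p.1 ^ 2 = 1 → (rootMap p).re ^ 2 < 1) := by
  have hs := one_sub_sq_pos hp
  have hc := thd_pos hp
  have hsphere := hp.1
  have hb : p.2.1 = (rootMap p).re * (1 - p.1 ^ 2) := by
    simp only [rootMap]
    rw [div_mul_cancel₀ _ hs.ne']
  have hac : p.1 * p.2.2 = (rootMap p).im * (1 - p.1 ^ 2) := by
    simp only [rootMap]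
    rw [div_mul_cancel₀ _ hs.ne']
  refine ⟨hb, hac, ?_, ?_⟩
  · apply mul_left_cancel₀ hs.ne'
    generalize (rootMap p).re = x at *
    generalize (rootMap p).im = y at *
    have h1 : (p.1 * p.2.2) ^ 2 = (y * (1 - p.1 ^ 2)) ^ 2 := by rw [hac]
    have h2 : p.2.1 ^ 2 = (x * (1 - p.1 ^ 2)) ^ 2 := by rw [← hb]
    linear_combination -h1 + p.1 ^ 2 * hsphere - p.1 ^ 2 * h2
  · intro h1
    have ha : p.1 = 0 := by simpa using h1
    rw [h1, mul_one] at hb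
    rw [← hb]
    have := hc ha
    rw [ha] at hsphere
    nlinarith

lemma rootMap_injOn : Set.InjOn rootMap OmegaRegion := by
  intro p hp q hq h
  obtain ⟨pb, pac, pe, p1⟩ := rootMap_spec hp
  obtain ⟨qb, qac, qe, q1⟩ := rootMap_spec hq
  rw [← h] at qb qac qe q1
  have hs : 1 - p.1 ^ 2 = 1 - q.1 ^ 2 :=
    root_unique (by nlinarith [sq_nonneg p.1])
      (by nlinarith [sq_nonneg q.1]) pe qe p1 q1
  have ha : p.1 = q.1 :=
    (pow_left_inj₀ (fst_nonneg hp) (fst_nonneg hq) two_ne_zero).mp (by linarith)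
  have hb : p.2.1 = q.2.1 := by rw [pb, qb, hs]
  have hc : p.2.2 = q.2.2 := by
    by_cases h0 : p.1 = 0
    · have hp2 := hp.1
      have hq2 := hq.1
      rw [ha, hb] at hp2
      exact (pow_left_inj₀ (thd_pos hp h0).le (thd_pos hq (ha ▸ h0)).le two_ne_zero).mp
        (by linarith)
    · apply mul_left_cancel₀ h0
      rw [pac, hs, ← qac, ha]
  exact Prod.ext ha (Prod.ext hb hc)

/-- For `y ≠ 0` the quadratic for `s` changes sign on `[0, 1]`. -/
lemma exists_root (x : ℝ) {y : ℝ} (hy : y ≠ 0) :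
    ∃ s, 0 < s ∧ s < 1 ∧ y ^ 2 * s = (1 - s) * (1 - x ^ 2 * s) := by
  have hy2 : 0 < y ^ 2 := by positivity
  have hcont : ContinuousOn (fun s : ℝ => y ^ 2 * s - (1 - s) * (1 - x ^ 2 * s))
      (Set.Icc 0 1) := by fun_prop
  obtain ⟨s, ⟨h0, h1⟩, hs⟩ := intermediate_value_Ioo zero_le_one hcont
    (show (0 : ℝ) ∈ _ from ⟨by norm_num, by norm_num; exact hy2⟩)
  exact ⟨s, h0, h1, by simpa [sub_eq_zero] using hs⟩

lemma rootMap_surjOn : Set.SurjOn rootMap OmegaRegion halfPlane := by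
  rintro ⟨x, y⟩ ⟨hw, hw1⟩
  simp only at hw
  have hx0 : 0 ≤ x := by
    rcases hw with h | h
    · exact h.le
    · exact h.1.ge
  by_cases hy : y = 0
  · subst hy
    have hx : 0 < x := by simpa using hw
    have hx1 : x ≠ 1 := by
      rintro rfl
      exact hw1 rfl
    rcases lt_or_gt_of_ne hx1 with h | h
    · -- The arc `a = 0`.
      have hpos : 0 < 1 - x ^ 2 := by nlinarith
      refine ⟨(0, x, √(1 - x ^ 2)), ⟨?_, Or.inr (Or.inl ⟨rfl, hx, Real.sqrt_pos.mpr hpos⟩)⟩, ?_⟩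
      · simp only [Real.sq_sqrt hpos.le]
        ring
      · apply Complex.ext <;> simp [rootMap]
    · -- The arc `c = 0`, where `1 - a² = x⁻²`.
      have hi0 : 0 < x⁻¹ := inv_pos.mpr hx
      have hi1 : x⁻¹ < 1 := inv_lt_one_of_one_lt₀ h
      have hpos : 0 < 1 - x⁻¹ ^ 2 := by nlinarith
      refine ⟨(√(1 - x⁻¹ ^ 2), x⁻¹, 0),
        ⟨?_, Or.inl ⟨Real.sqrt_pos.mpr hpos, hi0, by norm_num, by norm_num⟩⟩, ?_⟩
      · simp only [Real.sq_sqrt hpos.le]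
        ring
      · apply Complex.ext
        · simp only [rootMap, Real.sq_sqrt hpos.le]
          field_simp
          ring
        · simp [rootMap]
  · obtain ⟨s, hs0, hs1, hs⟩ := exists_root x hy
    have hpos : 0 < 1 - s := by linarith
    have ha := Real.sqrt_pos.mpr hpos
    have ha2 := Real.sq_sqrt hpos.le
    generalize √(1 - s) = a at ha ha2
    have hs' : s = 1 - a ^ 2 := by linarith
    have hsphere : a ^ 2 + (x * s) ^ 2 + (y * s / a) ^ 2 = 1 := by
      have h1 : (y * s / a) ^ 2 = s * (1 - x ^ 2 * s) := by
        rw [div_pow, ha2, div_eq_iff hpos.ne']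
        linear_combination s * hs
      rw [h1, ha2]
      ring
    refine ⟨(a, x * s, y * s / a), ⟨hsphere, ?_⟩, ?_⟩
    · simp only
      rcases hw with h | ⟨h, h'⟩
      · have hc2 : (y * s / a) ^ 2 < 1 ^ 2 := by nlinarith [sq_nonneg (x * s), pow_pos ha 2]
        have := abs_lt_of_sq_lt_sq' hc2 zero_le_one
        exact Or.inl ⟨ha, mul_pos h hs0, this.1, this.2⟩
      · exact Or.inr (Or.inr ⟨by rw [h, zero_mul], ha, div_pos (mul_pos h' hs0) ha⟩)
    · apply Complex.ext
      · simp only [rootMap]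
        rw [← hs', mul_div_cancel_right₀ _ hs0.ne']
      · simp only [rootMap]
        rw [← hs', mul_div_cancel₀ _ ha.ne', mul_div_cancel_right₀ _ hs0.ne']

lemma rootMap_bijOn : Set.BijOn rootMap OmegaRegion halfPlane :=
  ⟨rootMap_mapsTo, rootMap_injOn, rootMap_surjOn⟩

/-- The mapping `(a,b,c) ↦ λ = (b²−a²c²)/(1−a²)² + i·2abc/(1−a²)²` is a bijection from
`Ω` onto `ℂ \ {0, 1}`. -/
theorem stmt_14 :
    Set.BijOn
      (fun p : ℝ × ℝ × ℝ =>
        (((p.2.1 ^ 2 - p.1 ^ 2 * p.2.2 ^ 2) / (1 - p.1 ^ 2) ^ 2 : ℝ) : ℂ) +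
          (((2 * p.1 * p.2.1 * p.2.2) / (1 - p.1 ^ 2) ^ 2 : ℝ) : ℂ) * Complex.I)
      OmegaRegion {z : ℂ | z ≠ 0 ∧ z ≠ 1} := by
  refine (sq_bijOn.comp rootMap_bijOn).congr ?_
  intro p _
  -- The denominator is generalized so that `ring` does not expand it under the inverse.
  apply Complex.ext
  · simp only [Function.comp, rootMap, sq, Complex.mul_re, Complex.add_re, Complex.ofReal_re,
      Complex.ofReal_im, Complex.I_re, Complex.I_im]
    generalize 1 - p.1 * p.1 = s
    ring
  · simp only [Function.comp, rootMap, sq, Complex.mul_im, Complex.add_im, Complex.ofReal_re,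
      Complex.ofReal_im, Complex.I_re, Complex.I_im]
    generalize 1 - p.1 * p.1 = s
    ring
end

section
/- For (a,b,c) ∈ ℝ³ with a² + b² + c² = 1, the four 2×2 matrices P_1 = (1/2)[[1+a, −b−ic],[−b+ic, 1−a]], P_2 = (1/2)[[1−a, b−ic],[b+ic, 1+a]], P_3 = (1/2)[[1−a, −b+ic],[−b−ic, 1+a]], P_4 = (1/2)[[1+a, b+ic],[b−ic, 1−a]] are orthogonal projections (self-adjoint idempotents) on ℂ² satisfying P_1 + P_2 + P_3 + P_4 = 2·I. Moreover, if (a,b,c) ∈ Ω, then the quadruple (P_1, P_2, P_3, P_4) is irreducible: the only self-adjoint idempotent 2×2 matrices commuting with all four P_i are 0 and I. -/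
/-!
With the Pauli matrices `X, Y, Z`, the four matrices are `(1 + v · (X, Y, Z)) / 2` for the unit vectors
`v = (-b, c, a), (b, c, -a), (-b, -c, -a), (b, -c, a)`, hence orthogonal projections, and the four
vectors add up to zero. Moreover `P₁ + P₄ = 1 + a Z`, `P₂ + P₄ = 1 + b X` and `P₁ + P₂ = 1 + c Y`, so a
matrix `R` commuting with all `Pᵢ` commutes with every Pauli matrix whose coefficient is nonzero.
On `Ω` at least two of `a, b, c` are nonzero, and a matrix commuting with two Pauli matrices is
scalar; a scalar idempotent is `0` or `1` (`eq_zero_or_one_of_scalar`).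
-/

open Matrix Complex

theorem eq_zero_or_one_of_scalar (R : Matrix (Fin 2) (Fin 2) ℂ) (hR : R * R = R)
    (h01 : R 0 1 = 0) (h10 : R 1 0 = 0) (hd : R 0 0 = R 1 1) : R = 0 ∨ R = 1 := by
  have h := congrFun (congrFun hR 0) 0
  simp only [Matrix.mul_apply, Fin.sum_univ_two, h01, zero_mul, add_zero] at h
  have h' : R 0 0 * (R 0 0 - 1) = 0 := by linear_combination h
  rcases mul_eq_zero.mp h' with h0 | h1
  · left
    ext i j
    fin_cases i <;> fin_cases j <;> simp [h01, h10, ← hd, h0]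
  · right
    have h1' : R 0 0 = 1 := by linear_combination h1
    ext i j
    fin_cases i <;> fin_cases j <;> simp [h01, h10, ← hd, h1']

/-- For `(a,b,c)` on the unit sphere in `ℝ³`, the four matrices `P₁, P₂, P₃, P₄` are
orthogonal projections on `ℂ²` summing to `2·I`; moreover, if `(a,b,c) ∈ Ω`, the
quadruple is irreducible. -/
theorem stmt_15 (a b c : ℝ) (hsph : a ^ 2 + b ^ 2 + c ^ 2 = 1) :
    let P₁ : Matrix (Fin 2) (Fin 2) ℂ :=
      (1/2 : ℂ) • !![1 + (a : ℂ), -(b : ℂ) - (c : ℂ) * I;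
                     -(b : ℂ) + (c : ℂ) * I, 1 - (a : ℂ)]
    let P₂ : Matrix (Fin 2) (Fin 2) ℂ :=
      (1/2 : ℂ) • !![1 - (a : ℂ), (b : ℂ) - (c : ℂ) * I;
                     (b : ℂ) + (c : ℂ) * I, 1 + (a : ℂ)]
    let P₃ : Matrix (Fin 2) (Fin 2) ℂ :=
      (1/2 : ℂ) • !![1 - (a : ℂ), -(b : ℂ) + (c : ℂ) * I;
                     -(b : ℂ) - (c : ℂ) * I, 1 + (a : ℂ)]
    let P₄ : Matrix (Fin 2) (Fin 2) ℂ :=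
      (1/2 : ℂ) • !![1 + (a : ℂ), (b : ℂ) + (c : ℂ) * I;
                     (b : ℂ) - (c : ℂ) * I, 1 - (a : ℂ)]
    ((P₁ * P₁ = P₁ ∧ P₁ᴴ = P₁) ∧ (P₂ * P₂ = P₂ ∧ P₂ᴴ = P₂) ∧
     (P₃ * P₃ = P₃ ∧ P₃ᴴ = P₃) ∧ (P₄ * P₄ = P₄ ∧ P₄ᴴ = P₄) ∧
     P₁ + P₂ + P₃ + P₄ = (2 : ℂ) • (1 : Matrix (Fin 2) (Fin 2) ℂ)) ∧
    (((0 < a ∧ 0 < b ∧ -1 < c ∧ c < 1) ∨ (a = 0 ∧ 0 < b ∧ 0 < c) ∨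
      (b = 0 ∧ 0 < a ∧ 0 < c)) →
      ∀ R : Matrix (Fin 2) (Fin 2) ℂ, Rᴴ = R → R * R = R →
        R * P₁ = P₁ * R → R * P₂ = P₂ * R → R * P₃ = P₃ * R → R * P₄ = P₄ * R →
        R = 0 ∨ R = 1) := by
  intro P₁ P₂ P₃ P₄
  have hs : (a : ℂ) ^ 2 + (b : ℂ) ^ 2 + (c : ℂ) ^ 2 = 1 := by exact_mod_cast hsph
  have hI : I ^ 2 = -1 := I_sq
  refine ⟨⟨⟨?_, ?_⟩, ⟨?_, ?_⟩, ⟨?_, ?_⟩, ⟨?_, ?_⟩, ?_⟩, ?_⟩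
  case refine_10 =>
    intro hΩ R _ hR h1 h2 _ h4
    have e1 := fun i j => congrFun (congrFun h1 i) j
    have e2 := fun i j => congrFun (congrFun h2 i) j
    have e4 := fun i j => congrFun (congrFun h4 i) j
    simp only [P₁, P₂, P₄, Matrix.mul_apply, Fin.sum_univ_two, Matrix.smul_apply,
      smul_eq_mul] at e1 e2 e4
    have e1_00 := e1 0 0
    have e1_01 := e1 0 1
    have e1_10 := e1 1 0
    have e2_00 := e2 0 0
    have e2_01 := e2 0 1
    have e4_00 := e4 0 0
    have e4_01 := e4 0 1
    have e4_10 := e4 1 0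
    simp at e1_00 e1_01 e1_10 e2_00 e2_01 e4_00 e4_01 e4_10
    -- Commuting with `P₁ + P₄ = 1 + a Z`.
    have a01 : (a : ℂ) * R 0 1 = 0 := by
      linear_combination (-1 / 2 : ℂ) * (e1_01 + e4_01)
    have a10 : (a : ℂ) * R 1 0 = 0 := by
      linear_combination (1 / 2 : ℂ) * (e1_10 + e4_10)
    -- Commuting with `P₂ + P₄ = 1 + b X`.
    have bd : (b : ℂ) * (R 0 0 - R 1 1) = 0 := by
      linear_combination e2_01 + e4_01
    have bo : (b : ℂ) * (R 0 1 - R 1 0) = 0 := by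
      linear_combination e2_00 + e4_00
    -- Commuting with `P₁ + P₂ = 1 + c Y`; multiplying by `I` removes the factor `I` in `Y`.
    have cd : (c : ℂ) * (R 0 0 - R 1 1) = 0 := by
      linear_combination I * (e1_01 + e2_01) + c * (R 0 0 - R 1 1) * hI
    have co : (c : ℂ) * (R 0 1 + R 1 0) = 0 := by
      linear_combination (-I) * (e1_00 + e2_00) + c * (R 0 1 + R 1 0) * hI
    have cancel : ∀ {t : ℝ} {z : ℂ}, 0 < t → (t : ℂ) * z = 0 → z = 0 := fun ht hz =>
      (mul_eq_zero.mp hz).resolve_left (ofReal_ne_zero.mpr ht.ne')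
    rcases hΩ with ⟨ha, hb, -, -⟩ | ⟨-, hb, hc⟩ | ⟨-, ha, hc⟩
    · exact eq_zero_or_one_of_scalar R hR (cancel ha a01) (cancel ha a10)
        (sub_eq_zero.mp (cancel hb bd))
    · have hm := cancel hb bo
      have hp := cancel hc co
      exact eq_zero_or_one_of_scalar R hR (by linear_combination (hm + hp) / 2)
        (by linear_combination (hp - hm) / 2) (sub_eq_zero.mp (cancel hb bd))
    · exact eq_zero_or_one_of_scalar R hR (cancel ha a01) (cancel ha a10)
        (sub_eq_zero.mp (cancel hc cd))
  all_goals
    ext i j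
    fin_cases i <;> fin_cases j <;>
      simp [P₁, P₂, P₃, P₄, Matrix.mul_apply, Fin.sum_univ_two] <;>
      first
        | done
        | ring1
        | linear_combination (1 / 4 : ℂ) * hs - (1 / 4 : ℂ) * (c : ℂ) ^ 2 * hI
end
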